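/- arXiv:2112.02251 — 3 statements merged into one kernel-verified Lean document; each statement's English description precedes it below -/
import Mathlib

section
/- The number of u-parking functions of length m equals the sum over compositions s = (s₁,...,s_{uₘ−m+1}) of m satisfying s₁+...+s_{uᵢ−i+1} ≥ i for all 1 ≤ i ≤ m, of the multinomial coefficient m!/(s₁!···s_{uₘ−m+1}!) times ∏ᵢ (sᵢ+1)^(sᵢ−1). -/
def IsParkingFn {m : ℕ} (u : Fin m → ℕ) (π : Fin m → ℕ) : Prop :=
  (∀ i, 0 < π i) ∧ ∃ σ : Equiv.Perm (Fin m),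
    Monotone (fun i => π (σ i)) ∧ ∀ i, π (σ i) ≤ u i

/-!
A function is a parking function when the partial sums of its sequence of fiber sizes stay ahead of
a barrier. Both sides are thus weighted counts `m! * ballotSum F` of sequences: on the left the
weights are the coefficients of `F = exp` and the barrier is `b i + i`, where `b i + i = u (i + 1)`;
on the right `F` is the tree series `T = exp (X T)` and the barrier is `b i`. Cutting a sequence
where it first fails to be ahead of the barrier gives
`[X ^ m] F ^ k = ∑ i, ballotSum F b i * [X ^ (m - i)] F ^ (k - b i)`.
Since `[X ^ m] T ^ k = [X ^ m] exp ^ (k + m) - [X ^ (m - 1)] exp ^ (k + m)` for `0 < m`, subtracting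
two such relations for `exp` gives
`[X ^ m] T ^ k = ∑ i, ballotSum exp (b + id) i * [X ^ (m - i)] T ^ (k - b i)`,
which differs from the relation for `T` only in its ballot sums; both systems are unitriangular, so
these agree. For constant `b` the subtracted relation is Abel's identity, from which the formula for
`[X ^ m] T ^ k` itself follows.
-/

open Finset PowerSeries
open scoped Nat

/-- `IsBallot b m c` says that the counting function `c` (`c x` is the number of arrivals at
positions below `x`) stays ahead of the barrier `b`: its first `m` arrivals, numbered `j = 0, …,
m - 1`, occur below the positions `b j`. -/
def IsBallot (b : ℕ → ℕ) (m : ℕ) (c : ℕ → ℕ) : Prop := ∀ j < m, j < c (b j)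

instance (b : ℕ → ℕ) (m : ℕ) (c : ℕ → ℕ) : Decidable (IsBallot b m c) :=
  inferInstanceAs (Decidable (∀ j < m, j < c (b j)))

theorem existsUnique_isBallot_and_eq {b c : ℕ → ℕ} (hb : Monotone b) (hc : Monotone c) {m : ℕ}
    (hm : c (b m) ≤ m) : ∃! i, i ≤ m ∧ IsBallot b i c ∧ c (b i) = i := by
  have hex : ∃ i, c (b i) ≤ i := ⟨m, hm⟩
  have hballot : IsBallot b (Nat.find hex) c := fun j hj ↦ not_le.1 (Nat.find_min hex hj)
  refine ⟨Nat.find hex, ⟨Nat.find_min' hex hm, hballot, (Nat.find_spec hex).antisymm ?_⟩,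
    fun i ⟨_, hi, heq⟩ ↦ ?_⟩
  · rcases hi : Nat.find hex with _ | j
    · exact Nat.zero_le _
    · exact (hballot j (by lia)).trans_le (hc (hb (by lia)))
  · refine ((Nat.find_min' hex heq.le).eq_or_lt.resolve_right fun hlt ↦ ?_).symm
    exact (hi _ hlt).not_ge (Nat.find_spec hex)

theorem isBallot_congr {b c c' : ℕ → ℕ} {m : ℕ} (h : ∀ j < m, c (b j) = c' (b j)) :
    IsBallot b m c ↔ IsBallot b m c' :=
  forall₂_congr fun j hj ↦ by rw [h j hj]

section FinsuppAntidiag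

variable {ι : Type*} [DecidableEq ι] {S T : Finset ι}

theorem eq_zero_of_mem_finsuppAntidiag {n : ℕ} {s : ι →₀ ℕ} (hs : s ∈ S.finsuppAntidiag n) {l : ι}
    (hl : l ∉ S) : s l = 0 :=
  Finsupp.notMem_support_iff.1 fun h ↦ hl ((mem_finsuppAntidiag.1 hs).2 h)

theorem add_apply_of_mem_finsuppAntidiag (hST : Disjoint S T) {n : ℕ} (s : ι →₀ ℕ)
    {t : ι →₀ ℕ} (ht : t ∈ T.finsuppAntidiag n) {l : ι} (hl : l ∈ S) : (s + t) l = s l := by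
  rw [Finsupp.add_apply, eq_zero_of_mem_finsuppAntidiag ht (disjoint_left.1 hST hl), add_zero]

theorem filter_add_of_mem_finsuppAntidiag (hST : Disjoint S T) {i j : ℕ} {s t : ι →₀ ℕ}
    (hs : s ∈ S.finsuppAntidiag i) (ht : t ∈ T.finsuppAntidiag j) : (s + t).filter (· ∈ S) = s := by
  ext l
  by_cases hl : l ∈ S
  · rw [Finsupp.filter_apply_pos (· ∈ S) _ hl, add_apply_of_mem_finsuppAntidiag hST s ht hl]
  · rw [Finsupp.filter_apply_neg (· ∈ S) _ hl, eq_zero_of_mem_finsuppAntidiag hs hl]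

theorem filter_add_filter_of_mem_finsuppAntidiag (hST : Disjoint S T) {n : ℕ} {s : ι →₀ ℕ}
    (hs : s ∈ (S ∪ T).finsuppAntidiag n) : s.filter (· ∈ S) + s.filter (· ∈ T) = s := by
  ext l
  have hdisj : l ∈ S → l ∉ T := fun h ↦ disjoint_left.1 hST h
  have hzero : l ∉ S ∪ T → s l = 0 := eq_zero_of_mem_finsuppAntidiag hs
  grind [Finsupp.add_apply, Finsupp.filter_apply]

theorem sum_finsuppAntidiag_union {M : Type*} [AddCommMonoid M] (hST : Disjoint S T) (i j : ℕ)
    (g : (ι →₀ ℕ) → M) :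
    ∑ s ∈ (S ∪ T).finsuppAntidiag (i + j) with ∑ l ∈ S, s l = i, g s =
      ∑ s ∈ S.finsuppAntidiag i, ∑ t ∈ T.finsuppAntidiag j, g (s + t) := by
  have sum_filter_mem (U : Finset ι) (s : ι →₀ ℕ) :
      ∑ l ∈ U, s.filter (· ∈ U) l = ∑ l ∈ U, s l :=
    sum_congr rfl fun l hl ↦ Finsupp.filter_apply_pos _ _ hl
  rw [← sum_product']
  refine sum_nbij' (fun s ↦ (s.filter (· ∈ S), s.filter (· ∈ T))) (fun p ↦ p.1 + p.2)
    ?_ ?_ ?_ ?_ ?_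
  · intro s hs
    simp only [mem_filter, mem_product, mem_finsuppAntidiag, sum_union hST, sum_filter_mem,
      Finsupp.support_filter] at hs ⊢
    grind
  · rintro ⟨s, t⟩ hp
    obtain ⟨hs, ht⟩ := mem_product.1 hp
    have hS : ∑ l ∈ S, (s + t) l = i := by
      rw [sum_congr rfl fun l ↦ add_apply_of_mem_finsuppAntidiag hST s ht,
        (mem_finsuppAntidiag.1 hs).1]
    have hT : ∑ l ∈ T, (s + t) l = j := by
      rw [add_comm, sum_congr rfl fun l ↦ add_apply_of_mem_finsuppAntidiag hST.symm t hs,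
        (mem_finsuppAntidiag.1 ht).1]
    rw [mem_filter, mem_finsuppAntidiag, sum_union hST, hS, hT]
    exact ⟨⟨rfl, Finsupp.support_add.trans (union_subset_union (mem_finsuppAntidiag.1 hs).2
      (mem_finsuppAntidiag.1 ht).2)⟩, rfl⟩
  · intro s hs
    exact filter_add_filter_of_mem_finsuppAntidiag hST (mem_filter.1 hs).1
  · rintro ⟨s, t⟩ hp
    obtain ⟨hs, ht⟩ := mem_product.1 hp
    exact Prod.ext (filter_add_of_mem_finsuppAntidiag hST hs ht)
      (add_comm s t ▸ filter_add_of_mem_finsuppAntidiag hST.symm ht hs)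
  · intro s hs
    rw [filter_add_filter_of_mem_finsuppAntidiag hST (mem_filter.1 hs).1]

theorem coeff_pow_card {R : Type*} [CommSemiring R] (F : R⟦X⟧) (S : Finset ι) (m : ℕ) :
    coeff m (F ^ #S) = ∑ s ∈ S.finsuppAntidiag m, ∏ l ∈ S, coeff (s l) F := by
  rw [← prod_const, coeff_prod]

end FinsuppAntidiag

theorem existsUnique_mem_antidiagonal_isBallot {b : ℕ → ℕ} (hb : Monotone b) {m k : ℕ}
    (hk : b m ≤ k) {s : ℕ →₀ ℕ} (hs : s ∈ (range k).finsuppAntidiag m) :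
    ∃! p, p ∈ antidiagonal m ∧ IsBallot b p.1 (fun x ↦ ∑ l ∈ range x, s l) ∧
      ∑ l ∈ range (b p.1), s l = p.1 := by
  have hmono : Monotone fun x ↦ ∑ l ∈ range x, s l :=
    fun x y h ↦ sum_le_sum_of_subset (range_mono h)
  obtain ⟨i, ⟨him, hi⟩, huniq⟩ := existsUnique_isBallot_and_eq (m := m) hb hmono
    ((hmono hk).trans (mem_finsuppAntidiag.1 hs).1.le)
  refine ⟨(i, m - i), ⟨mem_antidiagonal.2 (by lia), hi⟩, ?_⟩
  rintro ⟨i', j'⟩ ⟨hp, hi'⟩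
  obtain rfl : i' = i := huniq i' ⟨HasAntidiagonal.antidiagonal.fst_le hp, hi'⟩
  exact (HasAntidiagonal.antidiagonal_congr hp (mem_antidiagonal.2 (by lia))).2 rfl

section BallotSum

variable {R : Type*} [CommSemiring R]

/-- The sum, over the sequences `s` of length `b m` and total `m` whose partial sums stay ahead of
the barrier `b`, of the weights `∏ l, [X ^ s l] F`. -/
noncomputable def ballotSum (F : R⟦X⟧) (b : ℕ → ℕ) (m : ℕ) : R :=
  ∑ s ∈ (range (b m)).finsuppAntidiag m with IsBallot b m fun x ↦ ∑ l ∈ range x, s l,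
    ∏ l ∈ range (b m), coeff (s l) F

theorem ballotSum_zero (F : R⟦X⟧) (b : ℕ → ℕ) : ballotSum F b 0 = constantCoeff F ^ b 0 := by
  simp [ballotSum, IsBallot]

theorem sum_filter_isBallot_and_eq (F : R⟦X⟧) {b : ℕ → ℕ} (hb : Monotone b) {i k : ℕ}
    (hk : b i ≤ k) (j : ℕ) :
    ∑ s ∈ (range k).finsuppAntidiag (i + j) with
        IsBallot b i (fun x ↦ ∑ l ∈ range x, s l) ∧ ∑ l ∈ range (b i), s l = i,
      ∏ l ∈ range k, coeff (s l) F =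
    ballotSum F b i * coeff j (F ^ (k - b i)) := by
  have hdisj : Disjoint (range (b i)) (Ico (b i) k) :=
    disjoint_left.2 fun l hl hl' ↦ (mem_range.1 hl).not_ge (mem_Ico.1 hl').1
  have hunion : range k = range (b i) ∪ Ico (b i) k := by
    simp only [range_eq_Ico, Ico_union_Ico_eq_Ico (Nat.zero_le _) hk]
  simp only [and_comm (b := ∑ _ ∈ _, _ = i)]
  rw [← filter_filter, sum_filter, hunion, sum_finsuppAntidiag_union hdisj,
    ← Nat.card_Ico, coeff_pow_card, ballotSum, sum_filter, sum_mul_sum]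
  refine sum_congr rfl fun s hs ↦ sum_congr rfl fun t ht ↦ ?_
  have hs' {l : ℕ} (hl : l ∈ range (b i)) : (s + t) l = s l :=
    add_apply_of_mem_finsuppAntidiag hdisj s ht hl
  have ht' {l : ℕ} (hl : l ∈ Ico (b i) k) : (s + t) l = t l :=
    add_comm s t ▸ add_apply_of_mem_finsuppAntidiag hdisj.symm t hs hl
  have hballot : IsBallot b i (fun x ↦ ∑ l ∈ range x, (s + t) l) ↔
      IsBallot b i (fun x ↦ ∑ l ∈ range x, s l) :=
    isBallot_congr fun j hj ↦ sum_congr rfl fun l hl ↦ hs' (range_mono (hb hj.le) hl)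
  simp only [hballot, ite_mul, zero_mul]
  rw [prod_union hdisj, prod_congr rfl fun l hl ↦ by rw [hs' hl],
    prod_congr rfl fun l (hl : l ∈ Ico (b i) k) ↦ by rw [ht' hl]]

theorem coeff_pow_eq_sum_ballotSum_mul (F : R⟦X⟧) {b : ℕ → ℕ} (hb : Monotone b) {m k : ℕ}
    (hk : b m ≤ k) :
    coeff m (F ^ k) =
      ∑ p ∈ antidiagonal m, ballotSum F b p.1 * coeff p.2 (F ^ (k - b p.1)) := by
  calc coeff m (F ^ k)
    _ = ∑ s ∈ (range k).finsuppAntidiag m, ∏ l ∈ range k, coeff (s l) F := by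
      rw [← coeff_pow_card, card_range]
    _ = ∑ s ∈ (range k).finsuppAntidiag m, ∑ p ∈ antidiagonal m with
          IsBallot b p.1 (fun x ↦ ∑ l ∈ range x, s l) ∧ ∑ l ∈ range (b p.1), s l = p.1,
          ∏ l ∈ range k, coeff (s l) F := by
      refine sum_congr rfl fun s hs ↦ ?_
      obtain ⟨p, hp, huniq⟩ := existsUnique_mem_antidiagonal_isBallot hb hk hs
      rw [(eq_singleton_iff_unique_mem.2 ⟨mem_filter.2 hp, fun q hq ↦ huniq q (mem_filter.1 hq)⟩),
        sum_singleton]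
    _ = ∑ p ∈ antidiagonal m, ∑ s ∈ (range k).finsuppAntidiag m with
          IsBallot b p.1 (fun x ↦ ∑ l ∈ range x, s l) ∧ ∑ l ∈ range (b p.1), s l = p.1,
          ∏ l ∈ range k, coeff (s l) F := by
      simp only [sum_filter]
      exact sum_comm
    _ = ∑ p ∈ antidiagonal m, ballotSum F b p.1 * coeff p.2 (F ^ (k - b p.1)) := by
      refine sum_congr rfl fun p hp ↦ ?_
      have hpk : b p.1 ≤ k := (hb (HasAntidiagonal.antidiagonal.fst_le hp)).trans hk
      rw [← sum_filter_isBallot_and_eq F hb hpk, mem_antidiagonal.1 hp]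

end BallotSum

/-- The normalised Abel polynomials `k (k + n) ^ (n - 1) / n!` at natural numbers `k`, with value
`1` at `n = 0`; `abelCoeff n k` is the coefficient of `X ^ n` in the `k`-th power of the tree
series. -/
noncomputable def abelCoeff : ℕ → ℕ → ℚ
  | 0, _ => 1
  | n + 1, k => k * (k + n + 1) ^ n / (n + 1)!

theorem coeff_exp_pow (n k : ℕ) : coeff n (exp ℚ ^ k) = k ^ n / n ! := by
  rw [exp_pow_eq_rescale_exp, coeff_rescale, coeff_exp, eq_ratCast, Rat.cast_id, mul_one_div]

theorem abelCoeff_succ_eq_sub (n k : ℕ) : abelCoeff (n + 1) k =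
    coeff (n + 1) (exp ℚ ^ (k + n + 1)) - coeff n (exp ℚ ^ (k + n + 1)) := by
  rw [coeff_exp_pow, coeff_exp_pow, abelCoeff, Nat.factorial_succ]
  push_cast
  field_simp
  ring

theorem abelCoeff_zero_right (n : ℕ) : abelCoeff n 0 = if n = 0 then 1 else 0 := by
  cases n <;> simp [abelCoeff]

theorem abelCoeff_eq_sum_ballotSum_mul {b : ℕ → ℕ} (hb : Monotone b) {m k : ℕ} (hk : b m ≤ k) :
    abelCoeff m k = ∑ p ∈ antidiagonal m,
      ballotSum (exp ℚ) (fun i ↦ b i + i) p.1 * abelCoeff p.2 (k - b p.1) := by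
  have hbi : Monotone fun i ↦ b i + i := hb.add monotone_id
  rcases m with _ | n
  · simp [abelCoeff, ballotSum_zero]
  -- Subtract the decompositions of the coefficients `n + 1` and `n` of one power of `exp`.
  rw [abelCoeff_succ_eq_sub, coeff_pow_eq_sum_ballotSum_mul _ hbi (m := n + 1) (by lia),
    coeff_pow_eq_sum_ballotSum_mul _ hbi (m := n) (by have := hb n.le_succ; lia),
    Finset.Nat.sum_antidiagonal_succ', Finset.Nat.sum_antidiagonal_succ', add_sub_assoc,
    ← sum_sub_distrib]
  congr 1
  · simp [abelCoeff]
  · refine sum_congr rfl fun p hp ↦ ?_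
    have hp : p.1 + p.2 = n := mem_antidiagonal.1 hp
    have hbp : b p.1 ≤ b (n + 1) := hb (by lia)
    rw [abelCoeff_succ_eq_sub, mul_sub,
      show k + n + 1 - (b p.1 + p.1) = k - b p.1 + p.2 + 1 by lia]

theorem ballotSum_exp_const_add (c m : ℕ) :
    ballotSum (exp ℚ) (fun i ↦ c + i) m = abelCoeff m c := by
  have hlast : (m, 0) ∈ antidiagonal m := mem_antidiagonal.2 (add_zero m)
  rw [abelCoeff_eq_sum_ballotSum_mul (b := fun _ ↦ c) (m := m) monotone_const le_rfl,
    sum_eq_single_of_mem _ hlast, abelCoeff, mul_one]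
  intro p hp hne
  have hp2 : p.2 ≠ 0 := fun h ↦ hne ((HasAntidiagonal.antidiagonal_congr' hp hlast).2 h)
  rw [tsub_self, abelCoeff_zero_right, if_neg hp2, mul_zero]

theorem abelCoeff_add (m c k : ℕ) : abelCoeff m (c + k) =
    ∑ p ∈ antidiagonal m, abelCoeff p.1 c * abelCoeff p.2 k := by
  simp_rw [abelCoeff_eq_sum_ballotSum_mul (b := fun _ ↦ c) (m := m) monotone_const
    (Nat.le_add_right c k), ballotSum_exp_const_add, Nat.add_sub_cancel_left]

/-- The exponential generating function `∑ (n + 1) ^ (n - 1) X ^ n / n!` of rooted forests on `n`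
labelled vertices. -/
noncomputable def treeSeries : ℚ⟦X⟧ := mk fun n ↦ ((n + 1) ^ (n - 1) : ℕ) / n !

theorem coeff_treeSeries_pow (m k : ℕ) : coeff m (treeSeries ^ k) = abelCoeff m k := by
  have hone (n : ℕ) : coeff n treeSeries = abelCoeff n 1 := by
    rcases n with _ | n
    · simp [treeSeries, abelCoeff]
    · rw [treeSeries, coeff_mk, abelCoeff, Nat.add_sub_cancel]
      push_cast
      ring
  induction k generalizing m with
  | zero => rw [pow_zero, coeff_one, abelCoeff_zero_right]
  | succ k ih => simp_rw [pow_succ, coeff_mul, ih, hone, abelCoeff_add]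

theorem ballotSum_exp_add_eq_ballotSum_treeSeries {b : ℕ → ℕ} (hb : Monotone b) (m : ℕ) :
    ballotSum (exp ℚ) (fun i ↦ b i + i) m = ballotSum treeSeries b m := by
  induction m using Nat.strong_induction_on with
  | _ m ih =>
    have hlast : (m, 0) ∈ antidiagonal m := mem_antidiagonal.2 (add_zero m)
    have hsum : ∑ p ∈ antidiagonal m,
          ballotSum (exp ℚ) (fun i ↦ b i + i) p.1 * abelCoeff p.2 (b m - b p.1) =
        ∑ p ∈ antidiagonal m, ballotSum treeSeries b p.1 * abelCoeff p.2 (b m - b p.1) := by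
      simp_rw [← abelCoeff_eq_sum_ballotSum_mul hb le_rfl, ← coeff_treeSeries_pow]
      exact coeff_pow_eq_sum_ballotSum_mul treeSeries hb le_rfl
    simp_rw [← add_sum_erase _ _ hlast, abelCoeff, mul_one] at hsum
    refine add_right_cancel (hsum.trans (congrArg _ (sum_congr rfl fun p hp ↦ ?_)))
    have hlt : p.1 < m := by
      obtain ⟨hne, hp⟩ := mem_erase.1 hp
      exact (HasAntidiagonal.antidiagonal.fst_le hp).lt_of_ne fun h ↦
        hne ((HasAntidiagonal.antidiagonal_congr hp hlast).2 h)
    rw [ih p.1 hlt]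

theorem sum_filter_val_lt {M : Type*} [AddCommMonoid M] {K x : ℕ} (hx : x ≤ K) (f : ℕ → M) :
    ∑ j : Fin K with j.val < x, f j = ∑ l ∈ range x, f l := by
  rw [sum_filter, ← sum_range fun l ↦ if l < x then f l else 0, ← sum_filter]
  exact sum_congr (by ext; simp; lia) fun _ _ ↦ rfl

theorem sum_finsuppAntidiag_range {M : Type*} [AddCommMonoid M] (K m : ℕ) (g : (Fin K → ℕ) → M) :
    ∑ s ∈ (range K).finsuppAntidiag m, g (fun j ↦ s j) =
      ∑ s ∈ Finset.Nat.antidiagonalTuple K m, g s := by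
  refine sum_nbij (fun s j ↦ s j) ?_ ?_ ?_ fun _ _ ↦ rfl
  · intro s hs
    rw [Finset.Nat.mem_antidiagonalTuple, ← sum_range fun l ↦ s l, (mem_finsuppAntidiag.1 hs).1]
  · intro s hs t ht hst
    ext l
    by_cases hl : l < K
    · exact congrFun hst ⟨l, hl⟩
    · rw [eq_zero_of_mem_finsuppAntidiag hs (by simpa using hl),
        eq_zero_of_mem_finsuppAntidiag ht (by simpa using hl)]
  · intro s hs
    let t : ℕ →₀ ℕ := (Finsupp.equivFunOnFinite.symm s).embDomain Fin.valEmbedding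
    have ht (j : Fin K) : t j = s j := Finsupp.embDomain_apply_self Fin.valEmbedding _ j
    refine ⟨t, mem_coe.2 (mem_finsuppAntidiag.2 ⟨?_, ?_⟩), funext ht⟩
    · rw [sum_range, sum_congr rfl fun j _ ↦ ht j]
      exact Finset.Nat.mem_antidiagonalTuple.1 hs
    · simp [t, Finsupp.support_embDomain, subset_iff]

theorem natCast_sum_multinomial_mul_prod (w : ℕ → ℕ) {b : ℕ → ℕ} (hb : Monotone b) (m : ℕ) :
    ((∑ s ∈ Finset.Nat.antidiagonalTuple (b m) m with
        IsBallot b m (fun x ↦ ∑ j with j.val < x, s j),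
      Nat.multinomial univ s * ∏ j, w (s j) : ℕ) : ℚ) =
    m ! * ballotSum (mk fun n ↦ (w n : ℚ) / n !) b m := by
  rw [Nat.cast_sum, sum_filter, ← sum_finsuppAntidiag_range, ballotSum, sum_filter, mul_sum]
  refine sum_congr rfl fun s hs ↦ ?_
  have hballot : IsBallot b m (fun x ↦ ∑ j : Fin (b m) with j.val < x, s j) ↔
      IsBallot b m (fun x ↦ ∑ l ∈ range x, s l) :=
    isBallot_congr fun j hj ↦ sum_filter_val_lt (hb hj.le) s
  have hspec : (∏ j : Fin (b m), ((s j)! : ℚ)) * Nat.multinomial univ (fun j : Fin (b m) ↦ s j) =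
      m ! := by
    have hsum : ∑ j : Fin (b m), s j = m := by rw [← sum_range s, (mem_finsuppAntidiag.1 hs).1]
    have := Nat.multinomial_spec univ fun j : Fin (b m) ↦ s j
    rw [hsum] at this
    exact_mod_cast this
  simp only [hballot, mul_ite, mul_zero, coeff_mk]
  congr 1
  rw [prod_range fun l ↦ (w (s l) : ℚ) / (s l)!, ← hspec, prod_div_distrib]
  push_cast
  field_simp [prod_ne_zero_iff]

/-- The number of times each value is taken by `p`. -/
def fiberCard {ι κ : Type*} [Fintype ι] [DecidableEq κ] (p : ι → κ) (j : κ) : ℕ := #{i | p i = j}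

section fiberCard

variable {ι κ : Type*} [Fintype ι] [DecidableEq κ]

theorem sum_fiberCard (p : ι → κ) (t : Finset κ) : ∑ j ∈ t, fiberCard p j = #{i | p i ∈ t} :=
  sum_card_fiberwise_eq_card_filter univ t p

variable [DecidableEq ι] [Fintype κ]

theorem card_filter_fiberCard_eq {s : κ → ℕ} (hs : ∑ j, s j = Fintype.card ι) :
    #{p : ι → κ | fiberCard p = s} = Nat.multinomial univ s := by
  let toFinsupp : (κ → ℕ) ≃ (κ →₀ ℕ) := Finsupp.equivFunOnFinite.symm
  have hmonomial (p : ι → κ) : ∏ i, (MvPolynomial.X (p i) : MvPolynomial κ ℕ) =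
      MvPolynomial.monomial (toFinsupp (fiberCard p)) 1 := by
    have hexp : toFinsupp (fiberCard p) = ∑ i, Finsupp.single (p i) 1 := by
      ext j
      simp [toFinsupp, fiberCard, Finsupp.single_apply]
    rw [hexp, MvPolynomial.monomial_sum_one]
    rfl
  calc #{p : ι → κ | fiberCard p = s}
    _ = ∑ p : ι → κ, MvPolynomial.coeff (toFinsupp s) (∏ i, MvPolynomial.X (p i)) := by
      simp [hmonomial, MvPolynomial.coeff_monomial]
    _ = MvPolynomial.coeff (toFinsupp s) ((∑ j, MvPolynomial.X j) ^ Fintype.card ι) := by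
      rw [← card_univ, ← prod_const, prod_univ_sum, Fintype.piFinset_univ, MvPolynomial.coeff_sum]
    _ = Nat.multinomial univ s := by
      rw [MvPolynomial.coeff_sum_X_pow_of_fintype, if_pos,
        Finsupp.multinomial_eq_of_support_subset (subset_univ _)]
      · rfl
      · rw [Finsupp.sum_fintype _ _ fun _ ↦ rfl, ← hs]
        rfl

theorem card_filter_fiberCard (Q : (κ → ℕ) → Prop) [DecidablePred Q] :
    #{p : ι → κ | Q (fiberCard p)} =
      ∑ s ∈ piAntidiag univ (Fintype.card ι) with Q s, Nat.multinomial univ s := by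
  rw [card_eq_sum_card_fiberwise (f := fiberCard)
    (t := {s ∈ piAntidiag univ (Fintype.card ι) | Q s})]
  · refine sum_congr rfl fun s hs ↦ ?_
    obtain ⟨hs, hQ⟩ := mem_filter.1 hs
    rw [← card_filter_fiberCard_eq (mem_piAntidiag.1 hs).1, filter_filter]
    exact congrArg card (filter_congr fun p _ ↦ and_iff_right_of_imp fun h ↦ h ▸ hQ)
  · intro p hp
    simp_all [sum_fiberCard]

end fiberCard

theorem isParkingFn_iff_lt_card {m : ℕ} {u π : Fin m → ℕ} :
    IsParkingFn u π ↔ (∀ i, 0 < π i) ∧ ∀ i, i.val < #{j | π j ≤ u i} := by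
  have hcard (σ : Equiv.Perm (Fin m)) (hσ : Monotone fun i ↦ π (σ i)) (i : Fin m) :
      i.val < #{j | π j ≤ u i} ↔ π (σ i) ≤ u i := by
    have hperm : #{j | π (σ j) ≤ u i} = #{j | π j ≤ u i} := card_equiv σ (by simp)
    rw [← Tuple.lt_card_le_iff_apply_le_of_monotone hσ, hperm]
  refine and_congr_right fun _ ↦ ⟨fun ⟨σ, hσ, hu⟩ i ↦ (hcard σ hσ i).2 (hu i), fun h ↦ ?_⟩
  exact ⟨Tuple.sort π, Tuple.monotone_sort π,
    fun i ↦ (hcard _ (Tuple.monotone_sort π) i).1 (h i)⟩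

theorem IsParkingFn.le {m K : ℕ} {u π : Fin m → ℕ} (hu : ∀ i, u i ≤ K) (h : IsParkingFn u π)
    (i : Fin m) : π i ≤ K := by
  obtain ⟨-, σ, -, hσ⟩ := h
  simpa using (hσ (σ.symm i)).trans (hu _)

theorem setOf_isParkingFn_eq_image {a : ℕ → ℕ} {m K : ℕ} (ha : ∀ i < m, a i ≤ K) :
    {π : Fin m → ℕ | IsParkingFn (fun i ↦ a i) π} =
      (fun (p : Fin m → Fin K) i ↦ (p i).val + 1) ''
        {p | IsBallot a m fun x ↦ #{i | (p i).val < x}} := by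
  ext π
  constructor
  · intro hπ
    have hpos := hπ.1
    refine ⟨fun i ↦ ⟨π i - 1, ?_⟩, fun j hj ↦ ?_, ?_⟩
    · have := hπ.le (fun i ↦ ha i i.2) i
      have := hpos i
      lia
    · refine ((isParkingFn_iff_lt_card.1 hπ).2 ⟨j, hj⟩).trans_eq ?_
      exact congrArg card (filter_congr fun i _ ↦ by have := hpos i; dsimp; lia)
    · exact funext fun i ↦ Nat.sub_add_cancel (hpos i)
  · rintro ⟨p, hp, rfl⟩
    exact isParkingFn_iff_lt_card.2 ⟨fun i ↦ Nat.succ_pos _, fun i ↦ hp i i.2⟩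

theorem ncard_isParkingFn {a : ℕ → ℕ} {m K : ℕ} (ha : ∀ i < m, a i ≤ K) :
    Set.ncard {π : Fin m → ℕ | IsParkingFn (fun i ↦ a i) π} =
      ∑ s ∈ Finset.Nat.antidiagonalTuple K m with IsBallot a m (fun x ↦ ∑ j with j.val < x, s j),
        Nat.multinomial univ s := by
  have hinj : Function.Injective fun (p : Fin m → Fin K) i ↦ (p i).val + 1 := fun p q h ↦
    funext fun i ↦ Fin.ext (Nat.succ_injective (congrFun h i))
  have hfiber (p : Fin m → Fin K) (x : ℕ) :
      #{i | (p i).val < x} = ∑ j with j.val < x, fiberCard p j := by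
    simp [sum_fiberCard]
  rw [setOf_isParkingFn_eq_image ha, Set.ncard_image_of_injective _ hinj]
  have hcount := card_filter_fiberCard (ι := Fin m) fun s : Fin K → ℕ ↦
    IsBallot a m fun x ↦ ∑ j with j.val < x, s j
  rw [Fintype.card_fin, piAntidiag_univ_fin_eq_antidiagonalTuple] at hcount
  rw [← hcount, ← Set.ncard_coe_finset, coe_filter_univ]
  simp_rw [hfiber]

theorem add_le_add_of_strictMonoOn {u : ℕ → ℕ} {m : ℕ} (hu : StrictMonoOn u (Set.Icc 1 m))
    {i j : ℕ} (hi : 1 ≤ i) (hij : i ≤ j) (hj : j ≤ m) : u i + j ≤ u j + i := by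
  induction j, hij using Nat.le_induction with
  | base => rfl
  | succ j hij ih =>
    have := ih (by lia)
    have := hu (a := j) (b := j + 1) ⟨by lia, by lia⟩ ⟨by lia, hj⟩ (by lia)
    lia

theorem exists_monotone_add_eq {u : ℕ → ℕ} {m : ℕ} (hu : StrictMonoOn u (Set.Icc 1 m))
    (hpos : 0 < u 1) : ∃ b : ℕ → ℕ, Monotone b ∧ b m = u m - m + 1 ∧
      ∀ i < m, b i = u (i + 1) - (i + 1) + 1 ∧ b i + i = u (i + 1) := by
  refine ⟨fun i ↦ u (min (i + 1) m) - min (i + 1) m + 1, fun i j hij ↦ ?_, by simp,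
    fun i hi ↦ ?_⟩
  · rcases m.eq_zero_or_pos with rfl | hm
    · simp
    have := add_le_add_of_strictMonoOn hu (i := min (i + 1) m) (j := min (j + 1) m)
      (by lia) (by lia) (by lia)
    dsimp only
    lia
  · have := add_le_add_of_strictMonoOn hu le_rfl (j := i + 1) (by lia) hi
    simp only [min_eq_left (Nat.succ_le_of_lt hi), true_and]
    lia

theorem ncard_isParkingFn_add {b : ℕ → ℕ} (hb : Monotone b) (m : ℕ) :
    Set.ncard {π : Fin m → ℕ | IsParkingFn (fun i ↦ b i + i) π} =
      ∑ s ∈ Finset.Nat.antidiagonalTuple (b m) m with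
          IsBallot b m (fun x ↦ ∑ j with j.val < x, s j),
        Nat.multinomial univ s * ∏ j, (s j + 1) ^ (s j - 1) := by
  have ha : Monotone fun i ↦ b i + i := hb.add monotone_id
  have hexp : exp ℚ = mk fun n ↦ ((1 : ℕ) : ℚ) / n ! := by
    ext; simp
  apply Nat.cast_injective (R := ℚ)
  calc (Set.ncard {π : Fin m → ℕ | IsParkingFn (fun i ↦ b i + i) π} : ℚ)
    _ = m ! * ballotSum (exp ℚ) (fun i ↦ b i + i) m := by
      rw [ncard_isParkingFn (a := fun i ↦ b i + i) fun i hi ↦ ha hi.le, hexp,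
        ← natCast_sum_multinomial_mul_prod (fun _ ↦ 1) ha m]
      simp only [prod_const_one, mul_one]
    _ = m ! * ballotSum treeSeries b m := by rw [ballotSum_exp_add_eq_ballotSum_treeSeries hb]
    _ = _ := (natCast_sum_multinomial_mul_prod (fun n ↦ (n + 1) ^ (n - 1)) hb m).symm

/- The number of `u`-parking functions of length `m` (with `u` one-indexed: `u 1 < ⋯ < u m`)
equals the sum, over compositions `s = (s₁,...,s_{uₘ-m+1})` of `m` into nonnegative parts
with `s₁ + ⋯ + s_{uᵢ-i+1} ≥ i` for all `1 ≤ i ≤ m`, of the multinomial coefficient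
times `∏ᵢ (sᵢ+1)^(sᵢ-1)`. -/

open Classical in
theorem parking_count_compositions (m : ℕ) (hm : 0 < m) (u : ℕ → ℕ)
    (hmono : StrictMonoOn u (Set.Icc 1 m)) (hpos : ∀ i ∈ Set.Icc 1 m, 0 < u i)
    (hum : m ≤ u m) :
    Set.ncard {π : Fin m → ℕ | IsParkingFn (fun i => u (i.val + 1)) π} =
      ∑ s ∈ (Finset.Nat.antidiagonalTuple (u m - m + 1) m).filter
        (fun s => ∀ i ∈ Finset.Icc 1 m,
          i ≤ ∑ j ∈ Finset.univ.filter
            (fun j : Fin (u m - m + 1) => j.val < u i - i + 1), s j),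
        Nat.multinomial Finset.univ s * ∏ j, (s j + 1) ^ (s j - 1) := by
  obtain ⟨b, hb, hbm, hbu⟩ := exists_monotone_add_eq hmono (hpos 1 ⟨le_rfl, hm⟩)
  have hset : {π : Fin m → ℕ | IsParkingFn (fun i => u (i.val + 1)) π} =
      {π : Fin m → ℕ | IsParkingFn (fun i ↦ b i + i) π} := by
    simp only [fun i : Fin m ↦ (hbu i i.2).2]
  have hballot (c : ℕ → ℕ) :
      (∀ i ∈ Finset.Icc 1 m, i ≤ c (u i - i + 1)) ↔ IsBallot b m c := by
    refine ⟨fun h j hj ↦ ?_, fun h i hi ↦ ?_⟩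
    · rw [(hbu j hj).1]
      exact h (j + 1) (Finset.mem_Icc.2 ⟨by lia, hj⟩)
    · obtain ⟨hi, him⟩ := Finset.mem_Icc.1 hi
      obtain ⟨j, rfl⟩ := Nat.exists_eq_add_of_le' hi
      exact (hbu j him).1 ▸ h j him
  rw [hset, ncard_isParkingFn_add hb, ← hbm]
  refine sum_congr ?_ fun _ _ ↦ rfl
  ext s
  simp only [mem_filter, ← hballot]
end

section
/- For positive integers a, b, m, l with 1 ≤ l ≤ m, and 0 ≤ k ≤ m−l, the number of (a,b)-parking functions π of length m with π₁ = a+kb, π₂ = a+(k+1)b, ..., π_l = a+(k+l−1)b equals a·∑_{s=0}^{m−l−k} binom(m−l, s)·(a+(m−l−s)b)^(m−s−l−1)·b^s·l·(s+l)^(s−1). -/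
/-!
Park cars with preferences `x` on a one-way street, and call the *core* of `x` the set `T` of cars
that park before the first empty spot. On `T` the preferences form a parking function, while the
remaining cars all prefer spots beyond the empty one. Splitting all functions into `{1, ..., N}`
along the core gives `N ^ n = ∑ C(n,t) P_t (N - u t) ^ (n - t)`, where `P_t` counts `u`-parking
functions of length `t`. For `u j = a + j b` this recursion also characterizes the terms of Abel's
binomial identity, so `P_t = a (a + t b) ^ (t - 1)`.

Now prescribe the prefix `u k, ..., u (k + l - 1)` and let `T` be the core of the other cars. If
`#T < k`, nobody fills the empty spot; otherwise the prefix fills exactly the `l` gaps from there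
on, and the cars off `T` must form a parking function for the bounds `u (#T + l + j) - u #T`, which
are `l b + j b` in the linear case. Summing over `T` with `s = n - #T` yields the formula.
-/

open Finset

section Abel

open Polynomial in
theorem sum_neg_one_pow_mul_choose_mul_pow_eq_zero {R : Type*} [CommRing R] (a b : R) {r n : ℕ}
    (h : r < n) : ∑ t ∈ range (n + 1), (-1) ^ (n - t) * (n.choose t : R) * (a + t * b) ^ r = 0 := by
  have hdeg : ((C a + C b * X) ^ r : R[X]).natDegree < n :=
    (natDegree_pow_le_of_le r (by compute_degree : (C a + C b * X : R[X]).natDegree ≤ 1)).trans_lt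
      (by omega)
  have hdiff := congrFun (fwdDiff_iter_eq_zero_of_degree_lt hdeg) 0
  simpa [fwdDiff_iter_eq_sum_shift, mul_comm b] using hdiff

/-- The Abel polynomial `a (a + n b) ^ (n - 1)`, equal to `1` when `n = 0`, evaluated at `a` and
with parameter `-b` in the usual normalization. It counts the `(a,b)`-parking functions of length
`n`. -/
def abelPoly {R : Type*} [CommSemiring R] (a b : R) : ℕ → R
  | 0 => 1
  | n + 1 => a * (a + (n + 1 : ℕ) * b) ^ n

theorem abelPoly_mul_pow {R : Type*} [CommSemiring R] (a b : R) {t s r : ℕ} (h : t + s = r + 1) :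
    abelPoly a b t * (a + t * b) ^ s = a * (a + t * b) ^ r := by
  cases t with
  | zero =>
    obtain rfl : s = r + 1 := by omega
    simp [abelPoly, pow_succ']
  | succ t =>
    obtain rfl : r = t + s := by omega
    rw [abelPoly, mul_assoc, ← pow_add]

theorem abelPoly_natCast {R : Type*} [CommSemiring R] (a b n : ℕ) :
    ((abelPoly a b n : ℕ) : R) = abelPoly (a : R) b n := by
  cases n <;> simp [abelPoly]

theorem abelPoly_eq_zpow {K : Type*} [Field K] {a : K} (ha : a ≠ 0) (b : K) (n : ℕ) :
    abelPoly a b n = a * (a + n * b) ^ ((n : ℤ) - 1) := by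
  cases n with
  | zero => simp [abelPoly, ha]
  | succ n => simp [abelPoly]

theorem abelPoly_mul_eq_zpow {K : Type*} [Field K] {b l : K} (hb : b ≠ 0) (hl : l ≠ 0) (s : ℕ) :
    abelPoly (l * b) b s = b ^ s * l * (s + l) ^ ((s : ℤ) - 1) := by
  rw [abelPoly_eq_zpow (mul_ne_zero hl hb), show l * b + s * b = b * (s + l) by ring, mul_zpow,
    zpow_sub_one₀ hb, zpow_natCast]
  field_simp

variable {R : Type*} [CommRing R] (a b : R)

theorem sum_neg_one_pow_mul_choose_mul_abelPoly (n : ℕ) :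
    ∑ t ∈ range (n + 1),
      (-1) ^ (n - t) * (n.choose t : R) * (abelPoly a b t * (a + t * b) ^ (n - t)) =
        if n = 0 then 1 else 0 := by
  cases n with
  | zero => simp [abelPoly]
  | succ r =>
    rw [if_neg r.succ_ne_zero, ← mul_zero a,
      ← sum_neg_one_pow_mul_choose_mul_pow_eq_zero a b r.lt_succ_self, mul_sum]
    refine sum_congr rfl fun t ht => ?_
    rw [abelPoly_mul_pow a b (r := r) (by have := mem_range.1 ht; omega)]
    ring

theorem choose_mul_choose_sub {n t j : ℕ} (h : t + j ≤ n) :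
    n.choose t * (n - t).choose j = n.choose j * (n - j).choose t := by
  rw [← Nat.choose_symm (by omega : j ≤ n), Nat.choose_mul (by omega : t ≤ n - j),
    ← Nat.choose_symm (by omega : j ≤ n - t), Nat.sub_right_comm]

theorem sum_choose_mul_abelPoly_mul_sub_pow (y : R) (n : ℕ) :
    ∑ t ∈ range (n + 1), (n.choose t : R) * abelPoly a b t * (y - t * b) ^ (n - t) =
      (a + y) ^ n := by
  calc
    _ = ∑ t ∈ range (n + 1), ∑ j ∈ range (n - t + 1), (n.choose j : R) * (a + y) ^ j *
          ((-1) ^ (n - j - t) * ((n - j).choose t : R) *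
            (abelPoly a b t * (a + t * b) ^ (n - j - t))) := by
      refine sum_congr rfl fun t ht => ?_
      rw [show y - t * b = (a + y) + -(a + t * b) by ring, add_pow, mul_sum]
      refine sum_congr rfl fun j hj => ?_
      have hchoose := congrArg (Nat.cast (R := R)) (choose_mul_choose_sub (n := n) (t := t) (j := j)
        (by have := mem_range.1 ht; have := mem_range.1 hj; omega))
      push_cast at hchoose
      rw [neg_pow, Nat.sub_right_comm n j t]
      linear_combination (abelPoly a b t * (a + y) ^ j * (-1) ^ (n - t - j) *
        (a + t * b) ^ (n - t - j)) * hchoose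
    _ = ∑ j ∈ range (n + 1), (n.choose j : R) * (a + y) ^ j * if n - j = 0 then 1 else 0 := by
      rw [sum_comm' (t' := range (n + 1)) (s' := fun j => range (n - j + 1))
        (by simp only [mem_range]; omega)]
      simp only [← mul_sum, sum_neg_one_pow_mul_choose_mul_abelPoly]
    _ = (a + y) ^ n := by
      rw [sum_range_succ, sum_eq_zero fun j hj => ?_]
      · simp
      · rw [if_neg (by have := mem_range.1 hj; omega), mul_zero]

theorem sum_choose_mul_abelPoly_mul_pow (a b n : ℕ) :
    ∑ t ∈ range (n + 1), n.choose t * abelPoly a b t * ((n - t) * b) ^ (n - t) =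
      (a + n * b) ^ n := by
  have habel := sum_choose_mul_abelPoly_mul_sub_pow (a : ℤ) b (n * b) n
  zify
  rw [← habel]
  refine sum_congr rfl fun t ht => ?_
  rw [abelPoly_natCast, Nat.cast_sub (Nat.lt_succ_iff.1 (mem_range.1 ht)), sub_mul]

end Abel

section Core

variable {ι κ : Type*} [Fintype ι] [Fintype κ] {u : ℕ → ℕ}

/-- The `u`-parking functions on `ι`: the positive `x` whose `j`-th smallest value, counting from
`0`, is at most `u j`. The order statistics are encoded by counting, so that no order on `ι` is
needed; `(a,b)`-parking functions are the case `u j = a + j * b`. -/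
def parkingFunctions (ι : Type*) [Fintype ι] (u : ℕ → ℕ) : Set (ι → ℕ) :=
  {x | (∀ i, 0 < x i) ∧ ∀ j < Fintype.card ι, j < #{i | x i ≤ u j}}

/-- The number of `u`-parking functions of length `n`. -/
noncomputable def parkingCount (u : ℕ → ℕ) (n : ℕ) : ℕ :=
  (parkingFunctions (Fin n) u).ncard

theorem isParkingFn_iff_mem_parkingFunctions {m : ℕ} {π : Fin m → ℕ} :
    IsParkingFn (fun i => u i) π ↔ π ∈ parkingFunctions (Fin m) u := by
  refine and_congr_right fun _ => ⟨?_, fun hcard => ⟨Tuple.sort π, Tuple.monotone_sort π, ?_⟩⟩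
  · rintro ⟨σ, hmono, hle⟩ j hj
    have hj' : j < m := by simpa using hj
    calc
      j < #((Iic (⟨j, hj'⟩ : Fin m)).map σ.toEmbedding) := by simp
      _ ≤ #{i | π i ≤ u j} := card_le_card fun i hi => by
        obtain ⟨i', hi', rfl⟩ := mem_map.1 hi
        exact mem_filter.2 ⟨mem_univ _, (hmono (mem_Iic.1 hi')).trans (hle ⟨j, hj'⟩)⟩
  · intro j
    by_contra! hlt
    have hsub : ({i | π i ≤ u j} : Finset (Fin m)) ⊆ (Iio j).map (Tuple.sort π).toEmbedding := by
      intro i hi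
      obtain ⟨i', rfl⟩ := (Tuple.sort π).surjective i
      refine mem_map_of_mem _ (mem_Iio.2 (lt_of_not_ge fun hji => ?_))
      exact (hlt.trans_le (Tuple.monotone_sort π hji)).not_ge (mem_filter.1 hi).2
    have := (hcard j (by simp)).trans_le (card_le_card hsub)
    simp at this

theorem parkingFunctions_finite (u : ℕ → ℕ) : (parkingFunctions ι u).Finite := by
  classical
  refine (Set.finite_Iic fun _ : ι => u (Fintype.card ι - 1)).subset fun x hx i => ?_
  have hpos : 0 < Fintype.card ι := Fintype.card_pos_iff.2 ⟨i⟩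
  have hcard := hx.2 (Fintype.card ι - 1) (by omega)
  have huniv : ({i | x i ≤ u (Fintype.card ι - 1)} : Finset ι) = univ :=
    (card_eq_iff_eq_univ _).1 (le_antisymm (card_le_univ _) (by omega))
  exact filter_eq_self.1 huniv i (mem_univ i)

theorem comp_equiv_mem_parkingFunctions (e : ι ≃ κ) {x : κ → ℕ} :
    x ∘ e ∈ parkingFunctions ι u ↔ x ∈ parkingFunctions κ u := by
  have hcard (j : ℕ) : #{i | x (e i) ≤ u j} = #{k | x k ≤ u j} := card_equiv e (by simp)
  simp only [parkingFunctions, Set.mem_ofPred_eq, hcard, Fintype.card_congr e, Function.comp_apply,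
    e.forall_congr_left, e.apply_symm_apply]

theorem ncard_parkingFunctions (u : ℕ → ℕ) :
    (parkingFunctions ι u).ncard = parkingCount u (Fintype.card ι) :=
  (Nat.card_congr (((Fintype.equivFin ι).arrowCongr (Equiv.refl ℕ)).symm.subtypeEquiv fun _ =>
    (comp_equiv_mem_parkingFunctions (Fintype.equivFin ι)).symm)).symm

theorem card_filter_coe {ι : Type*} (T : Finset ι) (p : ι → Prop) [DecidablePred p] :
    #{i : T | p i} = #{i ∈ T | p i} := by
  simp only [card_filter, sum_coe_sort T fun i => if p i then 1 else 0]

theorem restrict_mem_parkingFunctions {ι : Type*} {u : ℕ → ℕ} {x : ι → ℕ} {T : Finset ι} :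
    T.restrict x ∈ parkingFunctions T u ↔
      (∀ i ∈ T, 0 < x i) ∧ ∀ j < #T, j < #{i ∈ T | x i ≤ u j} := by
  refine and_congr Subtype.forall ?_
  rw [Fintype.card_coe]
  refine forall₂_congr fun j _ => ?_
  rw [← card_filter_coe T (x · ≤ u j)]
  rfl

theorem exists_card_filter_le (u : ℕ → ℕ) (x : ι → ℕ) : ∃ t, #{i | x i ≤ u t} ≤ t :=
  ⟨Fintype.card ι, card_le_univ _⟩

/-- The least `t` for which at most `t` of the values of `x` are bounded by `u t`. If cars with
preferences `x` park on a one-way street and `u j = j + 1`, it is the number of cars that park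
before the first empty spot. -/
def coreIndex (u : ℕ → ℕ) (x : ι → ℕ) : ℕ :=
  Nat.find (exists_card_filter_le u x)

/-- The set of cars that park before the first empty spot, for cars with preferences `x`; it is
characterized without reference to `coreIndex` by `core_eq_iff_restrict_mem`. -/
def core (u : ℕ → ℕ) (x : ι → ℕ) : Finset ι :=
  {i | x i ≤ u (coreIndex u x)}

theorem card_core (hu : Monotone u) (x : ι → ℕ) : #(core u x) = coreIndex u x := by
  refine le_antisymm (Nat.find_spec (exists_card_filter_le u x)) ?_
  rcases hindex : coreIndex u x with _ | s
  · exact Nat.zero_le _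
  · have hs : s < coreIndex u x := by omega
    have hcard : s < #{i | x i ≤ u s} := not_le.1 (Nat.find_min (exists_card_filter_le u x) hs)
    refine Nat.succ_le_of_lt (hcard.trans_le (card_le_card ?_))
    rw [core, hindex]
    exact monotone_filter_right _ fun i _ hi => hi.trans (hu s.le_succ)

theorem core_eq_iff (hu : Monotone u) {x : ι → ℕ} {T : Finset ι} :
    core u x = T ↔ (∀ i, i ∈ T ↔ x i ≤ u #T) ∧ ∀ j < #T, j < #{i | x i ≤ u j} := by
  constructor
  · rintro rfl
    simp only [card_core hu]
    exact ⟨fun i => mem_filter_univ i,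
      fun j hj => not_le.1 (Nat.find_min (exists_card_filter_le u x) hj)⟩
  · rintro ⟨hmem, hcard⟩
    have hT : ({i | x i ≤ u #T} : Finset ι) = T := by ext i; simp [hmem i]
    have hindex : coreIndex u x = #T :=
      (Nat.find_eq_iff _).2 ⟨by rw [hT], fun j hj => (hcard j hj).not_ge⟩
    rw [core, hindex, hT]

theorem core_eq_iff_restrict_mem (hu : Monotone u) {x : ι → ℕ} (hx : ∀ i, 0 < x i) {T : Finset ι} :
    core u x = T ↔ T.restrict x ∈ parkingFunctions T u ∧ ∀ i ∉ T, u #T < x i := by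
  rw [core_eq_iff hu, restrict_mem_parkingFunctions]
  constructor
  · rintro ⟨hmem, hcard⟩
    refine ⟨⟨fun i _ => hx i, fun j hj => (hcard j hj).trans_le (card_le_card fun i hi => ?_)⟩,
      fun i hi => not_le.1 (mt (hmem i).2 hi)⟩
    have hi' := (mem_filter.1 hi).2
    exact mem_filter.2 ⟨(hmem i).2 (hi'.trans (hu hj.le)), hi'⟩
  · rintro ⟨⟨-, hcard⟩, hout⟩
    refine ⟨fun i => ⟨fun hi => ?_, fun hi => by_contra fun hiT => (hout i hiT).not_ge hi⟩,
      fun j hj => (hcard j hj).trans_le (card_le_card (filter_subset_filter _ (subset_univ _)))⟩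
    have hpos : 0 < #T := card_pos.2 ⟨i, hi⟩
    have hall : #{i ∈ T | x i ≤ u (#T - 1)} = #T :=
      le_antisymm (card_filter_le _ _) (by have := hcard (#T - 1) (by omega); omega)
    exact (card_filter_eq_iff.1 hall i hi).trans (hu (by omega))

end Core

section Decomposition

variable {ι : Type*} [Fintype ι] [DecidableEq ι] {u : ℕ → ℕ}

/-- The function equal to `y` on `T` and to `z + c` off `T`. With `c = u #T` it reassembles
a function from its restriction to its core `T` and the excess over `u #T` of its other values. -/
def glue (T : Finset ι) (c : ℕ) (y : T → ℕ) (z : ↥Tᶜ → ℕ) (i : ι) : ℕ :=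
  if h : i ∈ T then y ⟨i, h⟩ else z ⟨i, mem_compl.2 h⟩ + c

theorem restrict_glue (T : Finset ι) (c : ℕ) (y : T → ℕ) (z : ↥Tᶜ → ℕ) :
    T.restrict (glue T c y z) = y := by
  ext i
  simp [glue]

theorem glue_sub (T : Finset ι) (c : ℕ) (y : T → ℕ) (z : ↥Tᶜ → ℕ) :
    (fun i : ↥Tᶜ => glue T c y z i - c) = z := by
  ext i
  simp [glue, mem_compl.1 i.2]

theorem glue_restrict_sub {T : Finset ι} {c : ℕ} {x : ι → ℕ} (hx : ∀ i ∉ T, c ≤ x i) :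
    glue T c (T.restrict x) (fun i => x i - c) = x := by
  ext i
  by_cases hi : i ∈ T
  · simp [glue, hi]
  · simp [glue, hi, hx i hi]

theorem glue_pos {T : Finset ι} {c : ℕ} {y : T → ℕ} {z : ↥Tᶜ → ℕ} (hy : ∀ i, 0 < y i)
    (hz : ∀ i, 0 < z i) (i : ι) : 0 < glue T c y z i := by
  unfold glue
  split_ifs
  exacts [hy _, Nat.add_pos_left (hz _) c]

theorem ncard_setOf_core_eq (hu : Monotone u) (T : Finset ι) {B : Set (↥Tᶜ → ℕ)}
    (hB : ∀ z ∈ B, ∀ i, 0 < z i) :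
    {x : ι → ℕ | core u x = T ∧ (∀ i, 0 < x i) ∧ (fun i : ↥Tᶜ => x i - u #T) ∈ B}.ncard =
      parkingCount u #T * B.ncard := by
  rw [← Fintype.card_coe T, ← ncard_parkingFunctions, ← Set.ncard_prod, Fintype.card_coe]
  refine Set.BijOn.ncard_eq (f := fun x => (T.restrict x, fun i : ↥Tᶜ => x i - u #T))
    (Set.InvOn.bijOn (f' := fun p => glue T (u #T) p.1 p.2) ⟨?_, ?_⟩ ?_ ?_)
  · rintro x ⟨hcore, hpos, -⟩
    exact glue_restrict_sub fun i hi => (((core_eq_iff_restrict_mem hu hpos).1 hcore).2 i hi).le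
  · rintro ⟨y, z⟩ -
    exact Prod.ext (restrict_glue T _ y z) (glue_sub T _ y z)
  · rintro x ⟨hcore, hpos, hxB⟩
    exact ⟨((core_eq_iff_restrict_mem hu hpos).1 hcore).1, hxB⟩
  · rintro ⟨y, z⟩ ⟨hy, hz⟩
    have hpos := glue_pos (c := u #T) hy.1 (hB z hz)
    refine ⟨(core_eq_iff_restrict_mem hu hpos).2 ⟨?_, fun i hi => ?_⟩, hpos, ?_⟩
    · rwa [restrict_glue]
    · simpa [glue, hi] using hB z hz ⟨i, mem_compl.2 hi⟩
    · rwa [glue_sub]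

theorem ncard_eq_sum_of_core (hu : Monotone u) {A : Set (ι → ℕ)} (hA : A.Finite)
    (B : ∀ T : Finset ι, Set (↥Tᶜ → ℕ)) (hB : ∀ T, ∀ z ∈ B T, ∀ i, 0 < z i) (c : ℕ → ℕ)
    (hc : ∀ T, (B T).ncard = c #T)
    (hAB : ∀ T x, core u x = T →
      (x ∈ A ↔ (∀ i, 0 < x i) ∧ (fun i : ↥Tᶜ => x i - u #T) ∈ B T)) :
    A.ncard = ∑ t ∈ range (Fintype.card ι + 1),
      (Fintype.card ι).choose t * (parkingCount u t * c t) := by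
  classical
  have hfiber (T : Finset ι) : #{x ∈ hA.toFinset | core u x = T} = parkingCount u #T * c #T := by
    rw [← hc, ← ncard_setOf_core_eq hu T (hB T), ← Set.ncard_coe_finset]
    congr 1
    ext x
    simp only [coe_filter, Set.Finite.mem_toFinset, Set.mem_ofPred_eq]
    rw [and_comm]
    exact and_congr_right (hAB T x)
  rw [Set.ncard_eq_toFinset_card A hA,
    card_eq_sum_card_fiberwise (f := core u) (t := univ.powerset) (by simp [Set.MapsTo])]
  simp only [hfiber, sum_powerset_apply_card fun t => parkingCount u t * c t, card_univ,
    smul_eq_mul]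

theorem pow_eq_sum_parkingCount (hu : Monotone u) {n N : ℕ} (hN : u n ≤ N) :
    N ^ n = ∑ t ∈ range (n + 1), n.choose t * (parkingCount u t * (N - u t) ^ (n - t)) := by
  have hbox {κ : Type} [Fintype κ] [DecidableEq κ] (M : ℕ) :
      ((Fintype.piFinset fun _ : κ => Icc 1 M : Finset (κ → ℕ)) : Set (κ → ℕ)).ncard =
        M ^ Fintype.card κ := by
    rw [Set.ncard_coe_finset, Fintype.card_piFinset, prod_const, Nat.card_Icc, card_univ,
      Nat.add_sub_cancel]
  have hsum := ncard_eq_sum_of_core hu (finite_toSet (Fintype.piFinset fun _ : Fin n => Icc 1 N))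
    (fun T => ↑(Fintype.piFinset fun _ : ↥Tᶜ => Icc 1 (N - u #T)))
    (fun T z hz i => (mem_Icc.1 (Fintype.mem_piFinset.1 hz i)).1)
    (fun t => (N - u t) ^ (n - t))
    (fun T => by rw [hbox, Fintype.card_coe, card_compl, Fintype.card_fin])
    (fun T x hcore => ?_)
  · rwa [hbox, Fintype.card_fin] at hsum
  have hT := (core_eq_iff hu).1 hcore
  have hTN : u #T ≤ N := (hu (card_finset_fin_le T)).trans hN
  simp only [mem_coe, Fintype.mem_piFinset, mem_Icc, Subtype.forall, mem_compl, forall_and,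
    Nat.succ_le_iff]
  refine and_congr_right fun _ => ⟨fun h => ⟨fun i hi => ?_, fun i _ => ?_⟩, fun h i => ?_⟩
  · have := mt (hT.1 i).2 hi
    omega
  · exact Nat.sub_le_sub_right (h i) _
  · by_cases hi : i ∈ T
    · exact ((hT.1 i).1 hi).trans hTN
    · have := h.2 i hi
      omega

theorem parkingCount_linear (a b n : ℕ) :
    parkingCount (fun j => a + j * b) n = abelPoly a b n := by
  have hmono : Monotone fun j => a + j * b := fun i j hij => by dsimp only; gcongr
  induction n using Nat.strong_induction_on with
  | _ n ih =>
    have hsum := (pow_eq_sum_parkingCount hmono (le_refl (a + n * b))).symm.trans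
      (sum_choose_mul_abelPoly_mul_pow a b n).symm
    rw [sum_range_succ, sum_range_succ, sum_congr rfl fun t ht => ?_] at hsum
    · simpa using Nat.add_left_cancel hsum
    · rw [ih t (mem_range.1 ht), ← mul_assoc, Nat.add_sub_add_left, Nat.sub_mul]

end Decomposition

section Prefix

theorem ncard_prefix_eq {α : Type*} {l n : ℕ} (S : Set (Fin (l + n) → α)) (y : ℕ → α) :
    {π | π ∈ S ∧ ∀ i : Fin (l + n), i.val < l → π i = y i}.ncard =
      ((Fin.append fun i : Fin l => y i) ⁻¹' S).ncard := by
  have happend {π : Fin (l + n) → α} (hπ : ∀ i : Fin (l + n), i.val < l → π i = y i) :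
      Fin.append (fun i : Fin l => y i) (fun i => π (Fin.natAdd l i)) = π := by
    rw [← Fin.append_castAdd_natAdd (f := π)]
    congr 1
    · exact funext fun i => (hπ (Fin.castAdd n i) i.isLt).symm
    · simp
  refine Set.BijOn.ncard_eq (f := fun π i => π (Fin.natAdd l i)) (Set.InvOn.bijOn
    (f' := Fin.append fun i : Fin l => y i) ⟨fun π hπ => happend hπ.2, fun x _ => ?_⟩
    (fun π hπ => ?_) fun x hx => ⟨hx, fun i hi => ?_⟩)
  · simp
  · rw [Set.mem_preimage, happend hπ.2]
    exact hπ.1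
  · exact Fin.append_left _ x ⟨i, hi⟩

theorem card_filter_append {α : Type*} {l n : ℕ} (p : α → Prop) [DecidablePred p] (y : Fin l → α)
    (x : Fin n → α) : #{i | p (Fin.append y x i)} = #{i | p (y i)} + #{i | p (x i)} := by
  simp only [card_filter, Fin.sum_univ_add, Fin.append_left, Fin.append_right]

variable {u : ℕ → ℕ}

theorem card_filter_shift_le (hu : StrictMono u) (l k j : ℕ) :
    #{i : Fin l | u (k + i) ≤ u j} = min l (j + 1 - k) := by
  rw [← Fin.card_filter_val_lt]
  congr 1
  ext i
  simp only [mem_filter_univ, hu.le_iff_le]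
  omega

theorem card_filter_le_of_core {ι : Type*} [Fintype ι] [DecidableEq ι] (hu : Monotone u)
    {x : ι → ℕ} {T : Finset ι} (hT : core u x = T) {j : ℕ} (hj : #T ≤ j) :
    #{i | x i ≤ u j} = #T + #{i : ↥Tᶜ | x i - u #T ≤ u j - u #T} := by
  have hmem := ((core_eq_iff hu).1 hT).1
  have hle := hu hj
  rw [card_filter_coe Tᶜ fun i => x i - u #T ≤ u j - u #T, ← union_compl T, filter_union,
    card_union_of_disjoint (disjoint_filter_filter disjoint_compl_right),
    filter_true_of_mem fun i hi => ((hmem i).1 hi).trans hle]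
  congr 2
  ext i
  simp only [mem_filter, mem_compl, hmem]
  omega

theorem append_mem_parkingFunctions_iff (hu : StrictMono u) (hu0 : 0 < u 0) {l k n : ℕ}
    (hk : k ≤ n) {x : Fin n → ℕ} {T : Finset (Fin n)} (hT : core u x = T) :
    Fin.append (fun i : Fin l => u (k + i)) x ∈ parkingFunctions (Fin (l + n)) u ↔
      (∀ i, 0 < x i) ∧ k ≤ #T ∧
        (fun i : ↥Tᶜ => x i - u #T) ∈ parkingFunctions ↥Tᶜ fun j => u (#T + l + j) - u #T := by
  obtain ⟨hmem, hcore⟩ := (core_eq_iff hu.monotone).1 hT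
  have hTn : #T ≤ n := card_finset_fin_le T
  have hcount (j : ℕ) : #{i | Fin.append (fun i : Fin l => u (k + i)) x i ≤ u j} =
      min l (j + 1 - k) + #{i | x i ≤ u j} := by
    rw [card_filter_append (· ≤ u j), card_filter_shift_le hu]
  have hbeyond (j : ℕ) (hj : #T ≤ j) := card_filter_le_of_core hu.monotone hT hj
  have hcompl : Fintype.card ↥Tᶜ = n - #T := by
    rw [Fintype.card_coe, card_compl, Fintype.card_fin]
  simp only [parkingFunctions, Set.mem_ofPred_eq, hcount, Fintype.card_fin, hcompl]
  constructor
  · rintro ⟨hpos, hpark⟩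
    refine ⟨fun i => by simpa using hpos (Fin.natAdd l i), ?_, fun i => ?_, fun j hj => ?_⟩
    · by_contra! hlt
      have hcard : ({i | x i ≤ u #T} : Finset (Fin n)) = T := by ext i; simp [hmem i]
      have := hpark #T (by omega)
      rw [hcard] at this
      omega
    · have := mt (hmem i).2 (mem_compl.1 i.2)
      omega
    · have := hpark (#T + l + j) (by omega)
      rw [hbeyond _ (by omega)] at this
      omega
  · rintro ⟨hpos, hkT, -, hpark⟩
    refine ⟨fun i => ?_, fun j hj => ?_⟩
    · refine Fin.addCases (fun i => ?_) (fun i => ?_) i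
      · simpa using hu0.trans_le (hu.monotone (Nat.zero_le _))
      · simpa using hpos i
    · rcases lt_or_ge j #T with hjT | hjT
      · exact (hcore j hjT).trans_le (Nat.le_add_left _ _)
      · rw [hbeyond j hjT]
        rcases lt_or_ge j (#T + l) with hjl | hjl
        · omega
        · obtain ⟨j', rfl⟩ := Nat.exists_eq_add_of_le hjl
          have := hpark j' (by omega)
          omega

theorem ncard_preimage_append_parkingFunctions (hu : StrictMono u) (hu0 : 0 < u 0) (l : ℕ) {k n : ℕ}
    (hk : k ≤ n) :
    ((Fin.append fun i : Fin l => u (k + i)) ⁻¹' parkingFunctions (Fin (l + n)) u).ncard =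
      ∑ s ∈ range (n - k + 1), n.choose s *
        (parkingCount u (n - s) * parkingCount (fun j => u (n - s + l + j) - u (n - s)) s) := by
  have hinj : Function.Injective (Fin.append (n := n) fun i : Fin l => u (k + i)) :=
    fun x y h => funext fun i => by simpa using congrFun h (Fin.natAdd l i)
  rw [ncard_eq_sum_of_core hu.monotone ((parkingFunctions_finite u).preimage hinj.injOn)
    (fun T => {z | k ≤ #T ∧ z ∈ parkingFunctions ↥Tᶜ fun j => u (#T + l + j) - u #T})
    (fun T z hz => hz.2.1)
    (fun t => if k ≤ t then parkingCount (fun j => u (t + l + j) - u t) (n - t) else 0)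
    (fun T => ?_) fun T x hT => append_mem_parkingFunctions_iff hu hu0 hk hT, Fintype.card_fin]
  · rw [← sum_range_reflect, ← sum_subset (range_subset_range.2 (by omega : n - k + 1 ≤ n + 1))]
    · refine sum_congr rfl fun s hs => ?_
      have hs' := mem_range.1 hs
      rw [show n + 1 - 1 - s = n - s by omega, if_pos (by omega), Nat.choose_symm (by omega),
        Nat.sub_sub_self (by omega)]
    · intro s hs hs'
      rw [mem_range] at hs hs'
      rw [if_neg (by omega), mul_zero, mul_zero]
  · split_ifs with hkT
    · simp only [hkT, true_and, Set.ofPred_mem_eq, ncard_parkingFunctions, Fintype.card_coe,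
        card_compl, Fintype.card_fin]
    · simp [hkT]

theorem ncard_preimage_append_parkingFunctions_linear (a b n l k : ℕ) (ha : 0 < a) (hb : 0 < b)
    (hk : k ≤ n) :
    ((Fin.append fun i : Fin l => a + (k + i) * b) ⁻¹'
        parkingFunctions (Fin (l + n)) fun j => a + j * b).ncard =
      ∑ s ∈ range (n - k + 1), n.choose s * (abelPoly a b (n - s) * abelPoly (l * b) b s) := by
  have hmono : StrictMono fun j => a + j * b := fun i j hij => by dsimp only; gcongr
  rw [ncard_preimage_append_parkingFunctions hmono (by simpa using ha) l hk]
  refine sum_congr rfl fun s _ => ?_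
  have hshift : (fun j => a + (n - s + l + j) * b - (a + (n - s) * b)) = fun j => l * b + j * b :=
    funext fun j => by rw [Nat.sub_eq_iff_eq_add (by gcongr; omega)]; ring
  rw [hshift, parkingCount_linear, parkingCount_linear]

end Prefix

/-- The number of `(a,b)`-parking functions of length `m` whose first `l` coordinates are
`a+kb, a+(k+1)b, ..., a+(k+l-1)b` equals
`a ∑_{s=0}^{m-l-k} C(m-l,s) (a+(m-l-s)b)^(m-s-l-1) b^s l (s+l)^(s-1)`
(exponents interpreted as integers). -/
theorem count_specified_prefix (a b m l k : ℕ) (ha : 0 < a) (hb : 0 < b)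
    (hl : 1 ≤ l) (hlm : l ≤ m) (hk : k ≤ m - l) :
    (Set.ncard {π : Fin m → ℕ | IsParkingFn (fun i => a + i.val * b) π ∧
        ∀ i : Fin m, i.val < l → π i = a + (k + i.val) * b} : ℝ) =
      (a : ℝ) * ∑ s ∈ Finset.range (m - l - k + 1),
        ((m - l).choose s : ℝ) *
          ((a + (m - l - s) * b : ℕ) : ℝ) ^ ((m : ℤ) - s - l - 1) *
          (b : ℝ) ^ s * (l : ℝ) * ((s + l : ℕ) : ℝ) ^ ((s : ℤ) - 1) := by
  obtain ⟨n, rfl⟩ := Nat.exists_eq_add_of_le hlm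
  rw [Nat.add_sub_cancel_left] at hk ⊢
  simp only [isParkingFn_iff_mem_parkingFunctions (u := fun j => a + j * b)]
  rw [ncard_prefix_eq _ fun i => a + (k + i) * b,
    ncard_preimage_append_parkingFunctions_linear a b n l k ha hb hk, Nat.cast_sum, mul_sum]
  refine sum_congr rfl fun s hs => ?_
  have hs' : s ≤ n := by have := mem_range.1 hs; omega
  have hexp : (l + n : ℤ) - s - l - 1 = ((n - s : ℕ) : ℤ) - 1 := by omega
  push_cast [abelPoly_natCast]
  rw [abelPoly_mul_eq_zpow (by positivity) (by positivity), abelPoly_eq_zpow (by positivity), hexp]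
  ring
end

section
/- The Borel distribution with parameter μ ∈ [0,1] is a probability distribution: ∑_{j=1}^∞ e^(−μj)(μj)^(j−1)/j! = 1 for 0 < μ ≤ 1. -/
/-!
Expanding the exponentials turns `∑ₖ e^(-zk) (zk)^(k-1) / k!`, `k ≥ 1`, into a power series in `z`.
Up to a factor, its `n`-th coefficient is the `(n + 1)`-st finite difference of `x ^ n` at `0`
without the summand at `x = 0`. For `n ≠ 0` that summand vanishes, and so does the finite
difference; hence only the constant coefficient `1` survives.

The rearrangement is legitimate for `z` near `0`. By Stirling's formula the original series
converges normally on the region enclosed by the Szegő curve `|z e^(1-z)| = 1`, `|z| ≤ 1`, which is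
star-shaped about `0` and contains `[0, 1]`. The identity theorem propagates the value `1` through
the interior, and continuity carries it to the boundary, where `1` lies.
-/

open Complex Finset Set Topology
open scoped Nat

theorem tsum_tsum_eq_tsum_sum_antidiagonal {A M : Type*} [AddCommMonoid A] [HasAntidiagonal A]
    [AddCommGroup M] [UniformSpace M] [IsUniformAddGroup M] [CompleteSpace M] [T2Space M]
    {f : A × A → M} (hf : Summable f) :
    ∑' i, ∑' j, f (i, j) = ∑' n, ∑ p ∈ antidiagonal n, f p := by
  have hsigma := HasAntidiagonal.sigmaAntidiagonalEquivProd.summable_iff.mpr hf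
  calc ∑' i, ∑' j, f (i, j) = ∑' p, f p := hf.tsum_prod.symm
    _ = ∑' p, (f ∘ HasAntidiagonal.sigmaAntidiagonalEquivProd) p :=
      (HasAntidiagonal.sigmaAntidiagonalEquivProd.tsum_eq f).symm
    _ = ∑' n, ∑' p : antidiagonal n, f p := hsigma.tsum_sigma
    _ = ∑' n, ∑ p ∈ antidiagonal n, f p := tsum_congr fun n => (antidiagonal n).tsum_subtype f

theorem sum_antidiagonal_neg_one_pow_mul_choose_mul_pow_eq_zero {R : Type*} [CommRing R] {m n : ℕ}
    (hm : m ≠ 0) (hmn : m ≤ n) :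
    ∑ p ∈ antidiagonal n, (-1 : R) ^ p.2 * (n + 1).choose (p.1 + 1) * (p.1 + 1) ^ m = 0 := by
  have hdiff := fwdDiff_iter_eq_sum_shift (1 : R) (fun x : R => x ^ m) (n + 1) 0
  rw [fwdDiff_iter_pow_eq_zero_of_lt (Nat.lt_succ_of_le hmn), Finset.sum_range_succ'] at hdiff
  rw [Finset.Nat.sum_antidiagonal_eq_sum_range_succ_mk]
  simpa [hm] using hdiff.symm

theorem norm_natCast_add_one {𝕜 : Type*} [RCLike 𝕜] (n : ℕ) : ‖(n + 1 : 𝕜)‖ = n + 1 := by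
  rw [← Nat.cast_add_one, RCLike.norm_natCast, Nat.cast_add_one]

theorem exp_neg_mul_pow_self_div_factorial_le {n : ℕ} (hn : n ≠ 0) :
    Real.exp (-n) * (n : ℝ) ^ n / n ! ≤ (√n)⁻¹ := by
  have hn' : (0 : ℝ) < n := by positivity
  have hstirling : √n * (Real.exp (-n) * (n : ℝ) ^ n) ≤ n ! := calc
    √n * (Real.exp (-n) * (n : ℝ) ^ n)
      ≤ √(2 * Real.pi * n) * (Real.exp (-n) * (n : ℝ) ^ n) := by
        gcongr
        nlinarith [Real.pi_gt_three]
    _ = √(2 * Real.pi * n) * (n / Real.exp 1) ^ n := by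
        rw [div_pow, Real.exp_neg, ← Real.exp_nat_mul, mul_one]
        ring
    _ ≤ n ! := Stirling.le_factorial_stirling n
  rw [div_le_iff₀ (by positivity), ← div_eq_inv_mul, le_div_iff₀' (by positivity)]
  exact hstirling

/-- The weight `e^(-zk) (zk)^(k-1) / k!` of the Borel distribution with complex parameter `z`,
indexed by `j = k - 1`. -/
noncomputable def borelTerm (z : ℂ) (j : ℕ) : ℂ :=
  exp (-(z * (j + 1))) * (z * (j + 1)) ^ j / (j + 1)!

theorem differentiable_borelTerm (j : ℕ) : Differentiable ℂ (borelTerm · j) := by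
  unfold borelTerm
  fun_prop

theorem norm_borelTerm (z : ℂ) (j : ℕ) :
    ‖borelTerm z j‖ = Real.exp (-(z.re * (j + 1))) * (‖z‖ * (j + 1)) ^ j / (j + 1)! := by
  have hre : (-(z * (j + 1))).re = -(z.re * (j + 1)) := by simp
  rw [borelTerm, norm_div, norm_mul, norm_pow, norm_mul, norm_exp, hre, norm_natCast_add_one,
    norm_natCast]

theorem norm_borelTerm_one_le (j : ℕ) :
    ‖borelTerm 1 j‖ ≤ (((j + 1 : ℕ) : ℝ) ^ (3 / 2 : ℝ))⁻¹ := by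
  set n := j + 1 with hn
  have hn' : (0 : ℝ) < n := by positivity
  calc ‖borelTerm 1 j‖ = Real.exp (-n) * (n : ℝ) ^ n / n ! * (n : ℝ)⁻¹ := by
        rw [norm_borelTerm, hn]
        push_cast
        simp only [one_re, norm_one, one_mul]
        field_simp
        ring
    _ ≤ (√n)⁻¹ * (n : ℝ)⁻¹ := by
        gcongr
        exact exp_neg_mul_pow_self_div_factorial_le (by omega)
    _ = ((n : ℝ) ^ (3 / 2 : ℝ))⁻¹ := by
        rw [← mul_inv, Real.sqrt_eq_rpow, ← Real.rpow_add_one hn'.ne']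
        norm_num

theorem summable_norm_borelTerm_one : Summable fun j => ‖borelTerm 1 j‖ :=
  .of_nonneg_of_le (fun _ => norm_nonneg _) norm_borelTerm_one_le <|
    (summable_nat_add_iff 1).mpr (Real.summable_nat_rpow_inv.mpr (by norm_num : (1 : ℝ) < 3 / 2))

/-- The compact region `|z e^(1-z)| ≤ 1`, `|z| ≤ 1` enclosed by the Szegő curve, on which the Borel
series converges. In the presence of the first inequality, `|z| ≤ 1` amounts to `re z ≤ 1`. -/
def szegoRegion : Set ℂ := {z | z.re ≤ 1 ∧ ‖z‖ ≤ Real.exp (z.re - 1)}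

theorem ofReal_mem_szegoRegion {x : ℝ} (hx0 : 0 ≤ x) (hx1 : x ≤ 1) : (x : ℂ) ∈ szegoRegion :=
  ⟨hx1, by simpa [abs_of_nonneg hx0] using Real.add_one_le_exp (x - 1)⟩

theorem mem_interior_szegoRegion {z : ℂ} (hre : z.re < 1) (hz : ‖z‖ < Real.exp (z.re - 1)) :
    z ∈ interior szegoRegion := by
  have hexp : ContinuousAt (fun w : ℂ => Real.exp (w.re - 1)) z := by fun_prop
  rw [mem_interior_iff_mem_nhds]
  filter_upwards [continuous_re.continuousAt.eventually_lt continuousAt_const hre,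
    continuous_norm.continuousAt.eventually_lt hexp hz] with w hw_re hw_norm
  exact ⟨hw_re.le, hw_norm.le⟩

theorem zero_mem_interior_szegoRegion : (0 : ℂ) ∈ interior szegoRegion :=
  mem_interior_szegoRegion (by simp) (by simpa using Real.exp_pos (-1))

theorem smul_mem_interior_szegoRegion {z : ℂ} (hz : z ∈ szegoRegion) {t : ℝ} (ht0 : 0 ≤ t)
    (ht1 : t < 1) : t • z ∈ interior szegoRegion := by
  obtain ⟨hre, hnorm⟩ := hz
  have hexp : t < Real.exp (t - 1) := by linarith [Real.add_one_lt_exp (sub_ne_zero.mpr ht1.ne)]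
  refine mem_interior_szegoRegion ?_ ?_
  · rw [smul_re, smul_eq_mul]
    nlinarith
  · calc ‖t • z‖ = t * ‖z‖ := by rw [norm_smul, Real.norm_of_nonneg ht0]
      _ ≤ t * Real.exp (z.re - 1) := by gcongr
      _ < Real.exp (t - 1) * Real.exp (z.re - 1) := by gcongr
      _ = Real.exp ((t - 1) + (z.re - 1)) := (Real.exp_add _ _).symm
      _ ≤ Real.exp ((t • z).re - 1) := by
        gcongr
        rw [smul_re, smul_eq_mul]
        nlinarith

theorem isPreconnected_interior_szegoRegion : IsPreconnected (interior szegoRegion) := by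
  have hstar : StarConvex ℝ 0 (interior szegoRegion) :=
    starConvex_zero_iff.mpr fun z hz t ht0 ht1 => by
      obtain rfl | ht := ht1.eq_or_lt
      · rwa [one_smul]
      · exact smul_mem_interior_szegoRegion (interior_subset hz) ht0 ht
  exact (hstar.isPathConnected zero_mem_interior_szegoRegion).isConnected.isPreconnected

theorem szegoRegion_subset_closure_interior : szegoRegion ⊆ closure (interior szegoRegion) := by
  intro z hz
  have hcont : Continuous fun t : ℝ => t • z := by fun_prop
  have hlim : Filter.Tendsto (fun t : ℝ => t • z) (𝓝[<] 1) (𝓝 z) :=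
    tendsto_nhdsWithin_of_tendsto_nhds (by simpa using hcont.tendsto 1)
  refine mem_closure_of_tendsto hlim ?_
  filter_upwards [Ioo_mem_nhdsLT zero_lt_one] with t ht
  exact smul_mem_interior_szegoRegion hz ht.1.le ht.2

theorem norm_borelTerm_le {z : ℂ} (hz : z ∈ szegoRegion) (j : ℕ) :
    ‖borelTerm z j‖ ≤ Real.exp 2 * ‖borelTerm 1 j‖ := by
  obtain ⟨hre, hnorm⟩ := hz
  have hre' : -1 ≤ z.re := by
    have hnorm_le_one : ‖z‖ ≤ 1 := hnorm.trans (Real.exp_le_one_iff.mpr (by linarith))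
    linarith [neg_abs_le z.re, abs_re_le_norm z]
  have hexp : Real.exp (-(z.re * (j + 1))) * ‖z‖ ^ j ≤ Real.exp 2 * Real.exp (-(j + 1)) := calc
    Real.exp (-(z.re * (j + 1))) * ‖z‖ ^ j
      ≤ Real.exp (-(z.re * (j + 1))) * Real.exp (z.re - 1) ^ j := by gcongr
    _ = Real.exp (-z.re - j) := by
        rw [← Real.exp_nat_mul, ← Real.exp_add]
        ring_nf
    _ ≤ Real.exp (2 + -(j + 1)) := by
        gcongr
        linarith
    _ = Real.exp 2 * Real.exp (-(j + 1)) := Real.exp_add _ _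
  simp only [norm_borelTerm, one_re, norm_one, one_mul, mul_pow, ← mul_assoc, ← mul_div_assoc]
  gcongr

theorem summable_norm_borelTerm {z : ℂ} (hz : z ∈ szegoRegion) :
    Summable fun j => ‖borelTerm z j‖ :=
  .of_nonneg_of_le (fun _ => norm_nonneg _) (norm_borelTerm_le hz)
    (summable_norm_borelTerm_one.mul_left _)

theorem continuousOn_tsum_borelTerm : ContinuousOn (fun z => ∑' j, borelTerm z j) szegoRegion :=
  continuousOn_tsum (fun j => (differentiable_borelTerm j).continuous.continuousOn)
    (summable_norm_borelTerm_one.mul_left _) fun j _ hz => norm_borelTerm_le hz j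

theorem analyticOnNhd_tsum_borelTerm :
    AnalyticOnNhd ℂ (fun z => ∑' j, borelTerm z j) (interior szegoRegion) :=
  (differentiableOn_tsum_of_summable_norm (summable_norm_borelTerm_one.mul_left _)
    (fun j => (differentiable_borelTerm j).differentiableOn) isOpen_interior
    fun j _ hz => norm_borelTerm_le (interior_subset hz) j).analyticOnNhd isOpen_interior

/-- The double array obtained from the Borel series by expanding each exponential: row `j` sums to
`borelTerm z j`, and the `n`-th antidiagonal collects the terms of degree `n` in `z`. -/
noncomputable def borelArray (z : ℂ) (p : ℕ × ℕ) : ℂ :=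
  (z * (p.1 + 1)) ^ p.1 / (p.1 + 1)! * ((-(z * (p.1 + 1))) ^ p.2 / p.2 !)

theorem hasSum_borelArray_row (z : ℂ) (j : ℕ) :
    HasSum (fun m => borelArray z (j, m)) (borelTerm z j) := by
  have hexp := NormedSpace.expSeries_div_hasSum_exp (-(z * (j + 1)))
  rw [← exp_eq_exp_ℂ] at hexp
  have hrow : borelTerm z j = (z * (j + 1)) ^ j / (j + 1)! * exp (-(z * (j + 1))) := by
    rw [borelTerm]
    ring
  simp only [borelArray, hrow]
  exact hexp.mul_left _

theorem hasSum_norm_borelArray_row (z : ℂ) (j : ℕ) :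
    HasSum (fun m => ‖borelArray z (j, m)‖) ‖borelTerm (-‖z‖) j‖ := by
  have hexp := NormedSpace.expSeries_div_hasSum_exp (‖z‖ * (j + 1))
  rw [← Real.exp_eq_exp_ℝ] at hexp
  have hrow : ‖borelTerm (-‖z‖) j‖ =
      (‖z‖ * (j + 1)) ^ j / (j + 1)! * Real.exp (‖z‖ * (j + 1)) := by
    rw [norm_borelTerm, norm_neg, norm_real, norm_norm, neg_re, ofReal_re, neg_mul, neg_neg]
    ring
  have hentry (m : ℕ) : ‖borelArray z (j, m)‖ =
      (‖z‖ * (j + 1)) ^ j / (j + 1)! * ((‖z‖ * (j + 1)) ^ m / m !) := by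
    simp only [borelArray, norm_mul, norm_div, norm_pow, norm_neg, norm_natCast_add_one,
      norm_natCast]
  simp_rw [hrow, hentry]
  exact hexp.mul_left _

theorem summable_borelArray {z : ℂ} (hz : (-‖z‖ : ℂ) ∈ szegoRegion) : Summable (borelArray z) := by
  refine .of_norm ((summable_prod_of_nonneg fun _ => norm_nonneg _).mpr
    ⟨fun j => (hasSum_norm_borelArray_row z j).summable, ?_⟩)
  simpa only [(hasSum_norm_borelArray_row z _).tsum_eq] using summable_norm_borelTerm hz

theorem sum_antidiagonal_borelArray (z : ℂ) (n : ℕ) :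
    ∑ p ∈ antidiagonal n, borelArray z p = if n = 0 then 1 else 0 := by
  split_ifs with hn
  · simp [hn, borelArray]
  have hterm : ∀ p ∈ antidiagonal n, borelArray z p =
      z ^ n / (n + 1)! * ((-1) ^ p.2 * (n + 1).choose (p.1 + 1) * (p.1 + 1) ^ n) := by
    rintro ⟨k, m⟩ hp
    obtain rfl : k + m = n := mem_antidiagonal.mp hp
    have hchoose : (((k + m + 1).choose (k + 1) : ℕ) : ℂ) = (k + m + 1)! / ((k + 1)! * m !) := by
      rw [Nat.cast_choose ℂ (by omega)]
      congr 4
      omega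
    rw [borelArray, hchoose, neg_pow, mul_pow, mul_pow]
    have hfactorial : ((k + m + 1)! : ℂ) ≠ 0 := mod_cast Nat.factorial_ne_zero _
    field_simp
    ring
  rw [Finset.sum_congr rfl hterm, ← Finset.mul_sum,
    sum_antidiagonal_neg_one_pow_mul_choose_mul_pow_eq_zero hn le_rfl, mul_zero]

theorem tsum_borelTerm_of_neg_norm_mem {z : ℂ} (hz : (-‖z‖ : ℂ) ∈ szegoRegion) :
    ∑' j, borelTerm z j = 1 := by
  simp_rw [← (hasSum_borelArray_row z _).tsum_eq,
    tsum_tsum_eq_tsum_sum_antidiagonal (summable_borelArray hz), sum_antidiagonal_borelArray,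
    tsum_ite_eq]

theorem eventually_tsum_borelTerm_eq_one : ∀ᶠ z in 𝓝 0, ∑' j, borelTerm z j = 1 := by
  have hcont : Continuous fun z : ℂ => (-‖z‖ : ℂ) := by fun_prop
  have hmem : szegoRegion ∈ 𝓝 (-‖(0 : ℂ)‖ : ℂ) := by
    simpa using mem_interior_iff_mem_nhds.mp zero_mem_interior_szegoRegion
  filter_upwards [hcont.continuousAt hmem] with z hz
  exact tsum_borelTerm_of_neg_norm_mem hz

theorem eqOn_tsum_borelTerm_one : EqOn (fun z => ∑' j, borelTerm z j) 1 szegoRegion := by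
  have hinterior : EqOn (fun z => ∑' j, borelTerm z j) 1 (interior szegoRegion) :=
    analyticOnNhd_tsum_borelTerm.eqOn_of_preconnected_of_eventuallyEq analyticOnNhd_const
      isPreconnected_interior_szegoRegion zero_mem_interior_szegoRegion
      eventually_tsum_borelTerm_eq_one
  exact hinterior.of_subset_closure continuousOn_tsum_borelTerm continuousOn_const interior_subset
    szegoRegion_subset_closure_interior

theorem borel_sums_to_one_general {z : ℂ} (hz : z ∈ szegoRegion) :
    HasSum (fun j : ℕ => exp (-(z * (j + 1))) * (z * (j + 1)) ^ j / ((j + 1)! : ℂ)) 1 :=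
  (summable_norm_borelTerm hz).of_norm.hasSum_iff.mpr (eqOn_tsum_borelTerm_one hz)

/-- The Borel distribution with parameter `0 < μ ≤ 1` is a probability distribution:
`∑_{j=1}^∞ e^{-μj}(μj)^{j-1}/j! = 1`. -/
theorem borel_sums_to_one (μ : ℝ) (h0 : 0 < μ) (h1 : μ ≤ 1) :
    ∑' j : ℕ, Real.exp (-(μ * (j + 1))) * (μ * (j + 1)) ^ j / ((j + 1).factorial : ℝ) = 1 := by
  have hsum := borel_sums_to_one_general (ofReal_mem_szegoRegion h0.le h1)
  exact HasSum.tsum_eq (hasSum_ofReal.mp (by push_cast; exact hsum))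
end
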